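/- For every type (x : ⋆) ⊢ A derivable in CaTT in the context with a single object variable, the definitional equality ⟦A⟧_B ≡ Id^{dim A + 1}_B(x) holds in HoTT (Lemma 5.2, type part). -/

import Mathlib

/-! ### Deep embedding of the fragment of Martin-Löf type theory ("HoTT") -/

/-- HoTT variable names: `Sum.inl n` is the image of CaTT/GSeTT variable `n`,
`Sum.inr k` are extra HoTT-only names. -/
abbrev HVar : Type := ℕ ⊕ ℕ

/-- The fixed variable `B`, not the name of any CaTT/GSeTT variable. -/
def Bv : HVar := Sum.inr 0

mutual
/-- Pre-terms of HoTT. `J A u x y e P p` is the Paulin-Mohring eliminator with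
base point `u : A`, motive `P` (with bound variables `x y e`) and base case `p`. -/
inductive HTm : Type
  | var : HVar → HTm
  | refl : HTy → HTm → HTm
  | J : HTy → HTm → HVar → HVar → HVar → HTy → HTm → HTm
  | app : HTm → HTm → HTm
  | lam : HVar → HTy → HTm → HTm

/-- Pre-types of HoTT: the Tarski universe `univ`, `el`, identity types and Π-types. -/
inductive HTy : Type
  | univ : HTy
  | el : HTm → HTy
  | id : HTy → HTm → HTm → HTy
  | pi : HVar → HTy → HTy → HTy
end

/-- Pre-substitutions of HoTT (head = most recent binding). -/
abbrev HSubst := List (HVar × HTm)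
/-- Pre-contexts of HoTT (head = most recent declaration). -/
abbrev HCtx := List (HVar × HTy)

def hlookup : HSubst → HVar → HTm
  | [], x => .var x
  | (y, t) :: γ, x => if y = x then t else hlookup γ x

/-- Remove the bindings of a bound variable from a substitution. -/
def hdrop (γ : HSubst) (x : HVar) : HSubst := γ.filter (fun q => q.1 ≠ x)

mutual
/-- Action of substitutions on HoTT pre-terms. -/
def hsubTm : HTm → HSubst → HTm
  | .var x, γ => hlookup γ x
  | .refl A u, γ => .refl (hsubTy A γ) (hsubTm u γ)
  | .J A u x y e P p, γ =>
      .J (hsubTy A γ) (hsubTm u γ) x y e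
        (hsubTy P (hdrop (hdrop (hdrop γ x) y) e)) (hsubTm p γ)
  | .app f u, γ => .app (hsubTm f γ) (hsubTm u γ)
  | .lam x A u, γ => .lam x (hsubTy A γ) (hsubTm u (hdrop γ x))
/-- Action of substitutions on HoTT pre-types. -/
def hsubTy : HTy → HSubst → HTy
  | .univ, _ => .univ
  | .el a, γ => .el (hsubTm a γ)
  | .id A u v, γ => .id (hsubTy A γ) (hsubTm u γ) (hsubTm v γ)
  | .pi x A B, γ => .pi x (hsubTy A γ) (hsubTy B (hdrop γ x))
end

/-- Composition of HoTT substitutions. -/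
def hcomp (δ γ : HSubst) : HSubst := δ.map (fun p => (p.1, hsubTm p.2 γ))

/-- The identity substitution of a context. -/
def hid (Γ : HCtx) : HSubst := Γ.map (fun p => (p.1, HTm.var p.1))

def hassoc : HCtx → HVar → Option HTy
  | [], _ => none
  | (y, A) :: Γ, x => if y = x then some A else hassoc Γ x

mutual
/-- Definitional equality of HoTT pre-terms, generated by the computation rule
`J(A,u,P,p) v refl ≡ p` together with congruence rules. -/
inductive HTmEq : HTm → HTm → Prop
  | jbeta (A : HTy) (u : HTm) (x y e : HVar) (P : HTy) (p v : HTm) (B : HTy) (w : HTm) :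
      HTmEq (.app (.app (.J A u x y e P p) v) (.refl B w)) p
  | refl (u : HTm) : HTmEq u u
  | symm : HTmEq u v → HTmEq v u
  | trans : HTmEq u v → HTmEq v w → HTmEq u w
  | reflCong : HTyEq A A' → HTmEq u u' → HTmEq (.refl A u) (.refl A' u')
  | JCong : HTyEq A A' → HTmEq u u' → HTyEq P P' → HTmEq p p' →
      HTmEq (.J A u x y e P p) (.J A' u' x y e P' p')
  | appCong : HTmEq f f' → HTmEq u u' → HTmEq (.app f u) (.app f' u')
  | lamCong : HTyEq A A' → HTmEq u u' → HTmEq (.lam x A u) (.lam x A' u')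

/-- Definitional equality of HoTT pre-types. -/
inductive HTyEq : HTy → HTy → Prop
  | refl (A : HTy) : HTyEq A A
  | symm : HTyEq A B → HTyEq B A
  | trans : HTyEq A B → HTyEq B C → HTyEq A C
  | elCong : HTmEq a a' → HTyEq (.el a) (.el a')
  | idCong : HTyEq A A' → HTmEq u u' → HTmEq v v' → HTyEq (.id A u v) (.id A' u' v')
  | piCong : HTyEq A A' → HTyEq B B' → HTyEq (.pi x A B) (.pi x A' B')
end

mutual
/-- Validity of HoTT contexts: `⊢ Γ`. -/
inductive HCtxJ : HCtx → Prop
  | nil : HCtxJ []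
  | cons : HCtxJ Γ → HTyJ Γ A → HCtxJ ((x, A) :: Γ)

/-- Validity of HoTT types: `Γ ⊢ A`. -/
inductive HTyJ : HCtx → HTy → Prop
  | univ : HCtxJ Γ → HTyJ Γ .univ
  | el : HTmJ Γ a .univ → HTyJ Γ (.el a)
  | id : HTmJ Γ u A → HTmJ Γ v A → HTyJ Γ (.id A u v)
  | pi : HTyJ Γ A → HTyJ ((x, A) :: Γ) B → HTyJ Γ (.pi x A B)
  | conv : HTyJ Γ A → HTyEq A B → HTyJ Γ B

/-- Typing of HoTT terms: `Γ ⊢ u : A`. -/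
inductive HTmJ : HCtx → HTm → HTy → Prop
  | var : HCtxJ Γ → hassoc Γ x = some A → HTmJ Γ (.var x) A
  | refl : HTmJ Γ u A → HTmJ Γ (.refl A u) (.id A u u)
  | lam : HTyJ Γ A → HTmJ ((x, A) :: Γ) u B → HTmJ Γ (.lam x A u) (.pi x A B)
  | app : HTmJ Γ f (.pi x A B) → HTmJ Γ u A → HTmJ Γ (.app f u) (hsubTy B [(x, u)])
  | J : HTyJ Γ A → HTmJ Γ u A →
      HTyJ ((e, .id A (.var x) (.var y)) :: (y, A) :: (x, A) :: Γ) P →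
      HTmJ Γ p (hsubTy P [(x, u), (y, u), (e, .refl A u)]) →
      HTmJ Γ (.J A u x y e P p)
        (.pi y A (.pi e (.id A u (.var y)) (hsubTy P [(x, u)])))
  | conv : HTmJ Γ u A → HTyEq A B → HTmJ Γ u B
  | convTm : HTmJ Γ u A → HTmEq u v → HTmJ Γ v A

/-- Typing of HoTT substitutions: `Δ ⊢ γ : Γ`. -/
inductive HSubJ : HCtx → HSubst → HCtx → Prop
  | nil : HCtxJ Δ → HSubJ Δ [] []
  | cons : HSubJ Δ γ Γ → HTyJ Γ A → HTmJ Δ t (hsubTy A γ) →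
      HSubJ Δ ((x, t) :: γ) ((x, A) :: Γ)
end

mutual
/-- Iterated identity types `Idⁿ_A(u)`. -/
def idN : ℕ → HTy → HTm → HTy
  | 0, A, _ => A
  | n+1, A, u => .id (idN n A u) (reflN n A u) (reflN n A u)
/-- Iterated reflexivities `reflⁿ_{A,u}`. -/
def reflN : ℕ → HTy → HTm → HTm
  | 0, _, u => u
  | n+1, A, u => .refl (idN n A u) (reflN n A u)
end

/-- Π-lifting `Π_Γ.A`: successively bind all variables of `Γ`. -/
def piLift : HCtx → HTy → HTy
  | [], A => A
  | (x, T) :: Γ, A => piLift Γ (.pi x T A)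

/-- λ-lifting `λ_Γ.u`: successively bind all variables of `Γ`. -/
def lamLift : HCtx → HTm → HTm
  | [], u => u
  | (x, T) :: Γ, u => lamLift Γ (.lam x T u)

/-! ### The dependent type theory CaTT -/

mutual
/-- Pre-terms of CaTT: variables and coherences `coh_{Γ,A}[γ]`. -/
inductive CTm : Type
  | var : ℕ → CTm
  | coh : CCtx → CTy → CSub → CTm
/-- Pre-types of CaTT: `⋆` and `u →_A v`. -/
inductive CTy : Type
  | obj : CTy
  | arr : CTy → CTm → CTm → CTy
/-- Pre-substitutions of CaTT. -/
inductive CSub : Type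
  | nil : CSub
  | cons : CSub → ℕ → CTm → CSub
/-- Pre-contexts of CaTT. -/
inductive CCtx : Type
  | nil : CCtx
  | cons : CCtx → ℕ → CTy → CCtx
end

def clookup : CSub → ℕ → CTm
  | .nil, x => .var x
  | .cons γ y t, x => if y = x then t else clookup γ x

mutual
/-- Action of CaTT substitutions on pre-terms; `coh_{Γ,A}[γ][δ] = coh_{Γ,A}[γ∘δ]`. -/
def csubTm : CTm → CSub → CTm
  | .var x, γ => clookup γ x
  | .coh Γ A δ, γ => .coh Γ A (ccomp δ γ)
/-- Action of CaTT substitutions on pre-types. -/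
def csubTy : CTy → CSub → CTy
  | .obj, _ => .obj
  | .arr A u v, γ => .arr (csubTy A γ) (csubTm u γ) (csubTm v γ)
/-- Composition of CaTT substitutions. -/
def ccomp : CSub → CSub → CSub
  | .nil, _ => .nil
  | .cons δ x t, γ => .cons (ccomp δ γ) x (csubTm t γ)
end

def cassoc : CCtx → ℕ → Option CTy
  | .nil, _ => none
  | .cons Γ y A, x => if y = x then some A else cassoc Γ x

/-- The set of variables declared in a CaTT context. -/
def cvarsCtx : CCtx → Finset ℕ
  | .nil => ∅
  | .cons Γ x _ => insert x (cvarsCtx Γ)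

mutual
/-- Variables used by a CaTT pre-term. -/
def varTm : CTm → Finset ℕ
  | .var x => {x}
  | .coh _ _ γ => varSub γ
/-- Variables used by a CaTT pre-type. -/
def varTy : CTy → Finset ℕ
  | .obj => ∅
  | .arr A u v => varTy A ∪ varTm u ∪ varTm v
/-- Variables used by a CaTT pre-substitution. -/
def varSub : CSub → Finset ℕ
  | .nil => ∅
  | .cons γ _ t => varSub γ ∪ varTm t
end

/-- Dimension of a CaTT type: `dim ⋆ = -1`, `dim (u →_A v) = dim A + 1`. -/
def cdim : CTy → ℤ
  | .obj => -1
  | .arr A _ _ => cdim A + 1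

/-- `dim A + 1`, as a natural number. -/
def cdimN : CTy → ℕ
  | .obj => 0
  | .arr A _ _ => cdimN A + 1

/-- Dimension of a CaTT context. -/
def cdimCtx : CCtx → ℤ
  | .nil => -1
  | .cons Γ _ A => max (cdimCtx Γ) (cdim A)

/-- The auxiliary ps-context judgement `Γ ⊢_ps x : A` for CaTT contexts. -/
inductive CPsAux : CCtx → ℕ → CTy → Prop
  | pss (x : ℕ) : CPsAux (.cons .nil x .obj) x .obj
  | pse : CPsAux Γ x A → y ∉ cvarsCtx Γ → f ∉ cvarsCtx Γ → f ≠ y →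
      CPsAux (.cons (.cons Γ y A) f (.arr A (.var x) (.var y))) f (.arr A (.var x) (.var y))
  | psd : CPsAux Γ f (.arr A (.var x) (.var y)) → CPsAux Γ y A

/-- The ps-context judgement `Γ ⊢_ps` for CaTT contexts. -/
inductive CPs : CCtx → Prop
  | ps : CPsAux Γ x .obj → CPs Γ

def ctail : CCtx → CCtx
  | .nil => .nil
  | .cons Γ _ _ => Γ

/-- The `i`-source `∂ᵢ⁻Γ` of a ps-context. -/
def csrc (i : ℤ) : CCtx → CCtx
  | .cons (.cons Δ y A) f F =>
      if cdim A + 1 ≥ i then csrc i Δ else .cons (.cons (csrc i Δ) y A) f F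
  | Γ => Γ

/-- The `i`-target `∂ᵢ⁺Γ` of a ps-context. -/
def ctgt (i : ℤ) : CCtx → CCtx
  | .cons (.cons Δ y A) f F =>
      if cdim A + 1 > i then ctgt i Δ
      else if cdim A + 1 = i then .cons (ctail (ctgt i Δ)) y A
      else .cons (.cons (ctgt i Δ) y A) f F
  | Γ => Γ

mutual
/-- `⊢ Γ` in CaTT. -/
inductive CCtxJ : CCtx → Prop
  | nil : CCtxJ .nil
  | cons : CCtxJ Γ → CTyJ Γ A → CCtxJ (.cons Γ x A)
/-- `Γ ⊢ A` in CaTT. -/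
inductive CTyJ : CCtx → CTy → Prop
  | obj : CCtxJ Γ → CTyJ Γ .obj
  | arr : CTmJ Γ u A → CTmJ Γ v A → CTyJ Γ (.arr A u v)
/-- `Γ ⊢ t : A` in CaTT. -/
inductive CTmJ : CCtx → CTm → CTy → Prop
  | var : CCtxJ Γ → cassoc Γ x = some A → CTmJ Γ (.var x) A
  | coh : CohJ Γ A → CSubJ Δ γ Γ → CTmJ Δ (.coh Γ A γ) (csubTy A γ)
/-- `Δ ⊢ γ : Γ` in CaTT. -/
inductive CSubJ : CCtx → CSub → CCtx → Prop
  | nil : CCtxJ Δ → CSubJ Δ .nil .nil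
  | cons : CSubJ Δ γ Γ → CTyJ Γ A → CTmJ Δ t (csubTy A γ) →
      CSubJ Δ (.cons γ x t) (.cons Γ x A)
/-- The coherence judgement `Γ ⊢ coh A` of CaTT. -/
inductive CohJ : CCtx → CTy → Prop
  | mk (i : ℤ) : CPs Γ → (i = cdimCtx Γ - 1 ∨ i = cdimCtx Γ) →
      CTmJ (csrc i Γ) u A → CTmJ (ctgt i Γ) v A →
      varTm u ∪ varTy A = cvarsCtx (csrc i Γ) →
      varTm v ∪ varTy A = cvarsCtx (ctgt i Γ) →
      CohJ Γ (.arr A u v)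
end

/-- Predicate: a CaTT pre-term contains no `coh` constructor. -/
def nocohTm : CTm → Prop
  | .var _ => True
  | .coh _ _ _ => False

/-- Predicate: a CaTT pre-type contains no `coh` constructor. -/
def nocohTy : CTy → Prop
  | .obj => True
  | .arr A u v => nocohTy A ∧ nocohTm u ∧ nocohTm v

/-- Predicate: a CaTT pre-context contains no `coh` constructor. -/
def nocohCtx : CCtx → Prop
  | .nil => True
  | .cons Γ _ A => nocohCtx Γ ∧ nocohTy A

/-! ### Translation of CaTT into HoTT -/

mutual
def szTm : CTm → ℕ
  | .var _ => 1
  | .coh Γ A γ => szCtx Γ + szTy A + szSub γ + 1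
def szTy : CTy → ℕ
  | .obj => 1
  | .arr A u v => szTy A + szTm u + szTm v + 1
def szSub : CSub → ℕ
  | .nil => 1
  | .cons γ _ t => szSub γ + szTm t + 1
def szCtx : CCtx → ℕ
  | .nil => 1
  | .cons Γ _ A => szCtx Γ + szTy A + 1
end

lemma szSub_pos (γ : CSub) : 0 < szSub γ := by cases γ <;> simp [szSub]
lemma szCtx_pos (Γ : CCtx) : 0 < szCtx Γ := by cases Γ <;> simp [szCtx]
lemma szTy_pos (A : CTy) : 0 < szTy A := by cases A <;> simp [szTy]

/-- The fresh HoTT variables `x'`, `y'`, `f'` used in the motives of `J`. -/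
def xV : HVar := Sum.inr 1
def yV : HVar := Sum.inr 2
def fV : HVar := Sum.inr 3

mutual
/-- Translation `⟦-⟧_B` of CaTT pre-terms into HoTT pre-terms. -/
def interpTm : CTm → HTm
  | .var x => .var (Sum.inl x)
  | .coh Γ A γ => hsubTm (elim Γ A Γ (hid (interpCtx Γ))) (interpSub γ)
termination_by t => szTm t
decreasing_by
  all_goals simp [szTm, szTy, szSub, szCtx]
  all_goals (have _h1 := szSub_pos γ; omega)
/-- Translation `⟦-⟧_B` of CaTT pre-types into HoTT pre-types. -/
def interpTy : CTy → HTy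
  | .obj => .el (.var Bv)
  | .arr A u v => .id (interpTy A) (interpTm u) (interpTm v)
termination_by A => szTy A
decreasing_by
  all_goals simp [szTm, szTy, szSub, szCtx]
  all_goals omega
/-- Translation `⟦-⟧_B` of CaTT pre-substitutions (`⟦⟨⟩⟧_B = ⟨B ↦ B⟩`). -/
def interpSub : CSub → HSubst
  | .nil => [(Bv, .var Bv)]
  | .cons γ x t => (Sum.inl x, interpTm t) :: interpSub γ
termination_by γ => szSub γ
decreasing_by
  all_goals simp [szTm, szTy, szSub, szCtx]
  all_goals omega
/-- Translation `⟦-⟧_B` of CaTT pre-contexts (`⟦∅⟧_B = (B : Type)`). -/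
def interpCtx : CCtx → HCtx
  | .nil => [(Bv, .univ)]
  | .cons Γ x A => (Sum.inl x, interpTy A) :: interpCtx Γ
termination_by Γ => szCtx Γ
decreasing_by
  all_goals simp [szTm, szTy, szSub, szCtx]
  all_goals omega
/-- The auxiliary operation `elim_B(Δ, A, Γ, γ)`, defined by induction on the
ps-context `Δ`, which interprets coherences via iterated applications of `J`. -/
def elim : CCtx → CTy → CCtx → HSubst → HTm
  | .cons .nil x .obj, A, _, _ =>
      reflN (cdimN A) (.el (.var Bv)) (.var (Sum.inl x))
  | .cons (.cons Δ y C) f (.arr C' (.var x) v'), A, Γ, γ =>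
      let iC := interpTy C
      let iΔ' := interpCtx (.cons (.cons Δ y C) f (.arr C' (.var x) v'))
      let P := hsubTy (hsubTy (interpTy A) γ)
          ((Sum.inl x, .var xV) :: (Sum.inl y, .var yV) :: (Sum.inl f, .var fV) :: hid iΔ')
      let p := elim Δ A Γ (hcomp γ
          ((Sum.inl y, .var (Sum.inl x)) ::
           (Sum.inl f, .refl iC (.var (Sum.inl x))) :: hid (interpCtx Δ)))
      .app (.app (.J iC (.var (Sum.inl x)) xV yV fV P p) (.var (Sum.inl y))) (.var (Sum.inl f))
  | _, _, _, _ => .var Bv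
termination_by Δ A _ _ => szTy A + szCtx Δ
decreasing_by
  all_goals simp [szTm, szTy, szSub, szCtx]
  all_goals first
    | omega
    | (have _h2 := szCtx_pos Δ; omega)
    | (have _h3 := szTy_pos A; omega)
end

/-- The translation `⟦coh_{Γ,A}⟧_B = elim_B(Γ, A, Γ, id_{⟦Γ⟧_B})` of a coherence. -/
def interpCoh (Γ : CCtx) (A : CTy) : HTm := elim Γ A Γ (hid (interpCtx Γ))

mutual
/-- Free variables of an HoTT pre-term. -/
def hfvTm : HTm → Finset HVar
  | .var x => {x}
  | .refl A u => hfvTy A ∪ hfvTm u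
  | .J A u x y e P p => hfvTy A ∪ hfvTm u ∪ (hfvTy P \ {x, y, e}) ∪ hfvTm p
  | .app f u => hfvTm f ∪ hfvTm u
  | .lam x A u => hfvTy A ∪ (hfvTm u \ {x})
/-- Free variables of an HoTT pre-type. -/
def hfvTy : HTy → Finset HVar
  | .univ => ∅
  | .el a => hfvTm a
  | .id A u v => hfvTy A ∪ hfvTm u ∪ hfvTm v
  | .pi x A B => hfvTy A ∪ (hfvTy B \ {x})
end

/-- The variables bound by an HoTT context. -/
def hctxVars (Γ : HCtx) : Finset HVar := (Γ.map Prod.fst).toFinset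



lemma aux_idN_congr {u u' : HTm} (A : HTy) (h : HTmEq u u') (n : ℕ) :
    HTyEq (idN n A u) (idN n A u') ∧ HTmEq (reflN n A u) (reflN n A u') := by
  induction n with
  | zero => exact ⟨by simpa [idN] using HTyEq.refl A, by simpa [reflN] using h⟩
  | succ n ih =>
    constructor
    · simp only [idN]; exact .idCong ih.1 ih.2 ih.2
    · simp only [reflN]; exact .reflCong ih.1 ih.2

lemma aux_sub_idN (A : HTy) (u : HTm) (σ : HSubst) (n : ℕ) :
    hsubTy (idN n A u) σ = idN n (hsubTy A σ) (hsubTm u σ) ∧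
    hsubTm (reflN n A u) σ = reflN n (hsubTy A σ) (hsubTm u σ) := by
  induction n with
  | zero => simp [idN, reflN]
  | succ n ih => simp [idN, reflN, hsubTy, hsubTm, ih]

lemma aux_cassoc_mem (Γ : CCtx) (z : ℕ) (A : CTy) (h : cassoc Γ z = some A) :
    z ∈ cvarsCtx Γ := by
  match Γ with
  | .nil => simp [cassoc] at h
  | .cons Γ y C =>
    simp only [cassoc] at h
    simp only [cvarsCtx, Finset.mem_insert]
    split_ifs at h with hy
    · exact Or.inl hy.symm
    · exact Or.inr (aux_cassoc_mem Γ z A h)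

lemma aux_lookupB (γ : CSub) : hlookup (interpSub γ) Bv = .var Bv := by
  match γ with
  | .nil => simp [interpSub, hlookup]
  | .cons γ y t =>
    have := aux_lookupB γ
    simp only [interpSub, hlookup]
    rw [if_neg (by simp [Bv]), this]

lemma aux_cdimN_sub (A : CTy) (γ : CSub) : cdimN (csubTy A γ) = cdimN A := by
  match A with
  | .obj => simp [csubTy]
  | .arr A u v => simp [csubTy, cdimN, aux_cdimN_sub A γ]

/-- All variables of `Γ` are sent by `σ` to iterated reflexivities. -/
def AuxGood (x : ℕ) (σ : HSubst) (Γ : CCtx) : Prop :=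
  ∀ z A, cassoc Γ z = some A →
    HTmEq (hlookup σ (Sum.inl z)) (reflN (cdimN A) (.el (.var Bv)) (.var (Sum.inl x)))

lemma aux_elim (x : ℕ) (σ : HSubst) (hB : hlookup σ Bv = .var Bv) (A : CTy) (Γ₀ : CCtx)
    {Γ : CCtx} {z : ℕ} {C : CTy} (h : CPsAux Γ z C) :
    AuxGood x σ Γ → ∀ γ : HSubst, HTmEq (hsubTm (elim Γ A Γ₀ γ) σ)
      (reflN (cdimN A) (.el (.var Bv)) (.var (Sum.inl x))) := by
  induction h with
  | pss w =>
    intro hg γ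
    rw [elim, (aux_sub_idN _ _ _ _).2]
    simp only [hsubTy, hsubTm, hB]
    refine (aux_idN_congr _ ?_ _).2
    have := hg w .obj (by simp [cassoc])
    simpa [cdimN, reflN] using this
  | @pse Γ w C y f _ hy hf hfy ih =>
    intro hg γ
    have hg' : AuxGood x σ Γ := by
      intro z D hz
      have hm := aux_cassoc_mem _ _ _ hz
      refine hg z D ?_
      have h1 : f ≠ z := by rintro rfl; exact hf hm
      have h2 : y ≠ z := by rintro rfl; exact hy hm
      simp [cassoc, h1, h2, hz]
    have hf' := hg f (.arr C (.var w) (.var y)) (by simp [cassoc])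
    simp only [cdimN, reflN] at hf'
    rw [elim]
    simp only [hsubTm]
    exact ((HTmEq.appCong (.refl _) hf').trans (.jbeta ..)).trans (ih hg' _)
  | psd _ ih => exact ih

lemma aux_lookup_interp (γ : CSub) (z : ℕ) :
    hlookup (interpSub γ) (Sum.inl z) = interpTm (clookup γ z) := by
  match γ with
  | .nil => simp [interpSub, hlookup, clookup, interpTm, Bv]
  | .cons γ y t =>
    have := aux_lookup_interp γ z
    simp only [interpSub, hlookup, clookup, Sum.inl.injEq]
    split_ifs <;> simp [this]

/-- Domain of a substitution. -/
def auxDom : CSub → Finset ℕ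
  | .nil => ∅
  | .cons γ y _ => insert y (auxDom γ)

lemma aux_lookup_comp (γ δ : CSub) (z : ℕ) (h : z ∈ auxDom γ) :
    clookup (ccomp γ δ) z = csubTm (clookup γ z) δ ∧ z ∈ auxDom (ccomp γ δ) := by
  match γ with
  | .nil => simp [auxDom] at h
  | .cons γ y t =>
    simp only [auxDom, Finset.mem_insert] at h
    simp only [ccomp, clookup, auxDom, Finset.mem_insert]
    by_cases hy : y = z
    · simp [hy]
    · have := aux_lookup_comp γ δ z (h.resolve_left (fun e => hy e.symm))
      simp [hy, this]

/-- Typing by dimensions only: `AuxD R t n` says that `t` has a type `A` with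
`dim A + 1 = n`, where `R` gives the dimensions of the variables. -/
inductive AuxD (R : ℕ → ℕ → Prop) : CTm → ℕ → Prop
  | var (z n : ℕ) : R z n → AuxD R (.var z) n
  | coh (Θ : CCtx) (A : CTy) (γ : CSub) : CPs Θ →
      (∀ z B, cassoc Θ z = some B → z ∈ auxDom γ) →
      (∀ z B, cassoc Θ z = some B → AuxD R (clookup γ z) (cdimN B)) →
      AuxD R (.coh Θ A γ) (cdimN A)

/-- Well-formedness of types by dimensions only. -/
def AuxDTy (R : ℕ → ℕ → Prop) : CTy → Prop
  | .obj => True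
  | .arr A u v => AuxDTy R A ∧ AuxD R u (cdimN A) ∧ AuxD R v (cdimN A)

lemma AuxD.mono {R S : ℕ → ℕ → Prop} (hRS : ∀ z n, R z n → S z n) {t : CTm} {n : ℕ}
    (h : AuxD R t n) : AuxD S t n := by
  induction h with
  | var z n h => exact .var z n (hRS z n h)
  | coh Θ A γ hp hd _ ih => exact .coh Θ A γ hp hd ih

lemma AuxDTy.mono {R S : ℕ → ℕ → Prop} (hRS : ∀ z n, R z n → S z n) (A : CTy)
    (h : AuxDTy R A) : AuxDTy S A := by
  match A with
  | .obj => simp [AuxDTy]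
  | .arr A u v =>
    simp only [AuxDTy] at h ⊢
    exact ⟨AuxDTy.mono hRS A h.1, h.2.1.mono hRS, h.2.2.mono hRS⟩

lemma AuxD.subst {R S : ℕ → ℕ → Prop} {γ : CSub}
    (hγ : ∀ z n, R z n → AuxD S (clookup γ z) n) {t : CTm} {n : ℕ}
    (h : AuxD R t n) : AuxD S (csubTm t γ) n := by
  induction h with
  | var z n h => simpa [csubTm] using hγ z n h
  | coh Θ A δ hp hd _ ih =>
    simp only [csubTm]
    refine .coh Θ A _ hp (fun z B hz => (aux_lookup_comp δ γ z (hd z B hz)).2) ?_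
    intro z B hz
    rw [(aux_lookup_comp δ γ z (hd z B hz)).1]
    exact ih z B hz

lemma AuxDTy.subst {R S : ℕ → ℕ → Prop} {γ : CSub}
    (hγ : ∀ z n, R z n → AuxD S (clookup γ z) n) (A : CTy)
    (h : AuxDTy R A) : AuxDTy S (csubTy A γ) := by
  match A with
  | .obj => simp [AuxDTy, csubTy]
  | .arr A u v =>
    simp only [AuxDTy, csubTy, aux_cdimN_sub] at h ⊢
    exact ⟨AuxDTy.subst hγ A h.1, h.2.1.subst hγ, h.2.2.subst hγ⟩

/-- `z` is declared somewhere in `Γ` with a type of shifted dimension `n`. -/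
def AuxR : CCtx → ℕ → ℕ → Prop
  | .nil, _, _ => False
  | .cons Γ y A, z, n => (z = y ∧ n = cdimN A) ∨ AuxR Γ z n

lemma aux_R_mem (Γ : CCtx) (z n : ℕ) (h : AuxR Γ z n) : z ∈ cvarsCtx Γ := by
  match Γ with
  | .nil => exact h.elim
  | .cons Γ y A =>
    simp only [cvarsCtx, Finset.mem_insert]
    rcases h with h | h
    · exact .inl h.1
    · exact .inr (aux_R_mem Γ z n h)

lemma aux_R_of_cassoc (Γ : CCtx) (z : ℕ) (A : CTy) (h : cassoc Γ z = some A) :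
    AuxR Γ z (cdimN A) := by
  match Γ with
  | .nil => simp [cassoc] at h
  | .cons Γ y C =>
    simp only [cassoc] at h
    split_ifs at h with hy
    · cases h; exact .inl ⟨hy.symm, rfl⟩
    · exact .inr (aux_R_of_cassoc Γ z A h)

lemma aux_ps_R {Γ : CCtx} {w : ℕ} {C : CTy} (h : CPsAux Γ w C) :
    ∀ z n, AuxR Γ z n → ∃ A, cassoc Γ z = some A ∧ cdimN A = n := by
  induction h with
  | pss w =>
    intro z n hz
    rcases hz with ⟨rfl, rfl⟩ | hz
    · exact ⟨.obj, by simp [cassoc], rfl⟩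
    · exact hz.elim
  | @pse Γ w C y f _ hy hf hfy ih =>
    intro z n hz
    rcases hz with ⟨rfl, rfl⟩ | ⟨rfl, rfl⟩ | hz
    · exact ⟨_, by simp [cassoc], rfl⟩
    · exact ⟨C, by simp [cassoc, hfy], rfl⟩
    · have hm := aux_R_mem _ _ _ hz
      have h1 : f ≠ z := by rintro rfl; exact hf hm
      have h2 : y ≠ z := by rintro rfl; exact hy hm
      simpa [cassoc, h1, h2] using ih z n hz
  | psd _ ih => exact ih

lemma aux_R_tail (Γ : CCtx) (z n : ℕ) (h : AuxR (ctail Γ) z n) : AuxR Γ z n := by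
  cases Γ with
  | nil => exact h
  | cons Γ y A => exact .inr h

lemma aux_R_src (i : ℤ) (Γ : CCtx) (z n : ℕ) (h : AuxR (csrc i Γ) z n) : AuxR Γ z n := by
  match Γ with
  | .nil => simpa [csrc] using h
  | .cons .nil y A => simpa [csrc] using h
  | .cons (.cons Δ y A) f F =>
    have ih := aux_R_src i Δ z n
    simp only [csrc] at h
    split_ifs at h
    · exact .inr (.inr (ih h))
    · rcases h with h | h | h
      · exact .inl h
      · exact .inr (.inl h)
      · exact .inr (.inr (ih h))

lemma aux_R_tgt (i : ℤ) (Γ : CCtx) (z n : ℕ) (h : AuxR (ctgt i Γ) z n) : AuxR Γ z n := by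
  match Γ with
  | .nil => simpa [ctgt] using h
  | .cons .nil y A => simpa [ctgt] using h
  | .cons (.cons Δ y A) f F =>
    have ih := aux_R_tgt i Δ z n
    simp only [ctgt] at h
    split_ifs at h
    · exact .inr (.inr (ih h))
    · rcases h with h | h
      · exact .inr (.inl h)
      · exact .inr (.inr (ih (aux_R_tail _ _ _ h)))
    · rcases h with h | h | h
      · exact .inl h
      · exact .inr (.inl h)
      · exact .inr (.inr (ih h))

mutual
theorem aux_ctx {Γ : CCtx} (h : CCtxJ Γ) :
    ∀ z A, cassoc Γ z = some A → AuxDTy (AuxR Γ) A := by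
  match h with
  | .nil => intro z A hz; simp [cassoc] at hz
  | .cons (x := y) hc hA =>
    have h1 := aux_ctx hc
    have h2 := aux_ty hA
    intro z D hz
    simp only [cassoc] at hz
    split_ifs at hz with hy
    · cases hz
      exact AuxDTy.mono (fun _ _ h => .inr h) _ h2
    · exact AuxDTy.mono (fun _ _ h => .inr h) _ (h1 z D hz)
theorem aux_ty {Γ : CCtx} {A : CTy} (h : CTyJ Γ A) : AuxDTy (AuxR Γ) A := by
  match h with
  | .obj _ => simp [AuxDTy]
  | .arr hu hv =>
    have h1 := aux_tm hu
    have h2 := aux_tm hv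
    simp only [AuxDTy]
    exact ⟨h1.2, h1.1, h2.1⟩
theorem aux_tm {Γ : CCtx} {t : CTm} {A : CTy} (h : CTmJ Γ t A) :
    AuxD (AuxR Γ) t (cdimN A) ∧ AuxDTy (AuxR Γ) A := by
  match h with
  | .var hc ha =>
    have h1 := aux_ctx hc
    exact ⟨.var _ _ (aux_R_of_cassoc _ _ _ ha), h1 _ _ ha⟩
  | .coh hc hs =>
    have h1 := aux_coh hc
    have h2 := aux_sub hs
    rw [aux_cdimN_sub]
    refine ⟨.coh _ _ _ h1.1 (fun z B hz => (h2 z B hz).1) (fun z B hz => (h2 z B hz).2), ?_⟩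
    refine AuxDTy.subst ?_ _ h1.2
    intro z n hz
    obtain ⟨hp⟩ := h1.1
    obtain ⟨B, hB, rfl⟩ := aux_ps_R hp z n hz
    exact (h2 z B hB).2
theorem aux_sub {Δ : CCtx} {γ : CSub} {Γ : CCtx} (h : CSubJ Δ γ Γ) :
    ∀ z B, cassoc Γ z = some B → z ∈ auxDom γ ∧ AuxD (AuxR Δ) (clookup γ z) (cdimN B) := by
  match h with
  | .nil _ => intro z A hz; simp [cassoc] at hz
  | .cons (x := y) hs _ ht =>
    have h1 := aux_sub hs
    have h2 := aux_tm ht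
    intro z D hz
    simp only [cassoc] at hz
    simp only [auxDom, Finset.mem_insert, clookup]
    split_ifs at hz with hy
    · cases hz
      rw [aux_cdimN_sub] at h2
      simpa [hy] using h2.1
    · simpa [hy] using ⟨Or.inr (h1 z D hz).1, (h1 z D hz).2⟩
theorem aux_coh {Γ : CCtx} {A : CTy} (h : CohJ Γ A) : CPs Γ ∧ AuxDTy (AuxR Γ) A := by
  match h with
  | .mk i hp _ hu hv _ _ =>
    have h1 := aux_tm hu
    have h2 := aux_tm hv
    refine ⟨hp, ?_⟩
    simp only [AuxDTy]
    exact ⟨AuxDTy.mono (aux_R_src i _) _ h1.2, h1.1.mono (aux_R_src i _),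
      h2.1.mono (aux_R_tgt i _)⟩
end

lemma aux_sound (x : ℕ) {t : CTm} {n : ℕ} (h : AuxD (AuxR (.cons .nil x .obj)) t n) :
    HTmEq (interpTm t) (reflN n (.el (.var Bv)) (.var (Sum.inl x))) := by
  induction h with
  | var z n h =>
    rcases h with ⟨rfl, rfl⟩ | h
    · simpa [interpTm, cdimN, reflN] using HTmEq.refl _
    · exact h.elim
  | coh Θ A γ hp hd _ ih =>
    obtain ⟨hp⟩ := hp
    rw [interpTm]
    refine aux_elim x _ (aux_lookupB γ) _ _ hp ?_ _
    intro z B hz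
    rw [aux_lookup_interp]
    exact ih z B hz

lemma aux_soundTy (x : ℕ) (A : CTy) (h : AuxDTy (AuxR (.cons .nil x .obj)) A) :
    HTyEq (interpTy A) (idN (cdimN A) (.el (.var Bv)) (.var (Sum.inl x))) := by
  match A with
  | .obj => simpa [interpTy, cdimN, idN] using HTyEq.refl _
  | .arr A u v =>
    simp only [AuxDTy] at h
    simp only [interpTy, cdimN, idN]
    exact .idCong (aux_soundTy x A h.1) (aux_sound x h.2.1) (aux_sound x h.2.2)

/-- Lemma 5.2, type part. -/
theorem stmt15 (x : ℕ) (A : CTy)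
    (h : CTyJ (.cons .nil x .obj) A) :
    HTyEq (interpTy A) (idN (cdimN A) (.el (.var Bv)) (.var (Sum.inl x))) := by 
  exact aux_soundTy x A (aux_ty h)
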